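/- arXiv:2601.17760 — 5 statements merged into one kernel-verified Lean document; each statement's English description precedes it below -/
import Mathlib

section
/- (Lemma 3.1) Let I ⊆ H⁺ be a k-subspace. Then the image under π of the set {x ∈ ker m : c̃(x) ∈ A ⊗ I} equals the full preimage {y ∈ Q : can(y) ∈ A ⊗ I}. In other words, π(ver_u⁻¹(A ⊗ I)) = can⁻¹(A ⊗ I) inside the balanced tensor product Q = A ⊗_B A, where ver_u is the restriction of c̃ to the universal calculus ker m. -/
/-!
The whole argument rests on the identity `(id ⊗ ε) ∘ c̃ = m` (`counit_ctilde`), which is counitality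
of the coaction multiplied on the left by `a`. Since `I ⊆ ker ε`, the map `id ⊗ ε` kills `A ⊗ I`
(`counit_AtI`), so every `x` with `c̃ x ∈ A ⊗ I` automatically lies in `ker m`. Hence any lift to
`A ⊗ A` of an element of `can⁻¹(A ⊗ I)` already belongs to `ver_u⁻¹(A ⊗ I)`, and the two subspaces
of `Q` agree because `can ∘ π = c̃`.
-/

open TensorProduct

noncomputable section

variable {k H A : Type*} [Field k] [Ring H] [HopfAlgebra k H] [Ring A] [Algebra k A]

/-- The lifted canonical map `c̃ : A ⊗ A → A ⊗ H`, `c̃(a ⊗ a') = a a'₍₀₎ ⊗ a'₍₁₎`,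
for a coaction `δ : A → A ⊗ H`. -/
def ctilde (δ : A →ₐ[k] A ⊗[k] H) : A ⊗[k] A →ₗ[k] A ⊗[k] H :=
  (TensorProduct.map (LinearMap.mul' k A) LinearMap.id)
    ∘ₗ (TensorProduct.assoc k A A H).symm.toLinearMap
    ∘ₗ (TensorProduct.map LinearMap.id δ.toLinearMap)

/-- The map `β : A ⊗ A → A ⊗ H`, `β(a ⊗ a') = a₍₀₎a' ⊗ a₍₁₎`. -/
def betaMap (δ : A →ₐ[k] A ⊗[k] H) : A ⊗[k] A →ₗ[k] A ⊗[k] H :=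
  (TensorProduct.map (LinearMap.mul' k A) LinearMap.id)
    ∘ₗ (TensorProduct.assoc k A A H).symm.toLinearMap
    ∘ₗ (TensorProduct.map LinearMap.id (TensorProduct.comm k H A).toLinearMap)
    ∘ₗ (TensorProduct.assoc k A H A).toLinearMap
    ∘ₗ (TensorProduct.map δ.toLinearMap LinearMap.id)

/-- The diagonal coaction `δ₂ : A ⊗ A → (A ⊗ A) ⊗ H`,
`δ₂(a ⊗ a') = (a₍₀₎ ⊗ a'₍₀₎) ⊗ a₍₁₎a'₍₁₎`. -/
def delta2 (δ : A →ₐ[k] A ⊗[k] H) : A ⊗[k] A →ₗ[k] (A ⊗[k] A) ⊗[k] H :=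
  (TensorProduct.map LinearMap.id (LinearMap.mul' k H))
    ∘ₗ (TensorProduct.tensorTensorTensorComm k A H A H).toLinearMap
    ∘ₗ (TensorProduct.map δ.toLinearMap δ.toLinearMap)

/-- `J ⊆ A ⊗ A`: the k-span of the balanced relations `ab ⊗ a' − a ⊗ ba'`
with `b` a coinvariant element (`δ b = b ⊗ 1`). -/
def Jrel (δ : A →ₐ[k] A ⊗[k] H) : Submodule k (A ⊗[k] A) :=
  Submodule.span k {x | ∃ a a' b : A, δ b = b ⊗ₜ[k] (1 : H) ∧
    x = (a * b) ⊗ₜ[k] a' - a ⊗ₜ[k] (b * a')}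

/-- `A ⊗ I`: the k-span of `{a ⊗ x : a ∈ A, x ∈ I}` inside `A ⊗ H`. -/
def AtI (A : Type*) [Ring A] [Algebra k A] (I : Submodule k H) :
    Submodule k (A ⊗[k] H) :=
  Submodule.span k {z | ∃ a : A, ∃ h ∈ I, z = a ⊗ₜ[k] h}

/-- Counitality of the coaction `δ` : `(id ⊗ ε) ∘ δ = id` under `A ⊗ k ≅ A`. -/
def Counital (δ : A →ₐ[k] A ⊗[k] H) : Prop :=
  ∀ a : A, (TensorProduct.rid k A)
    (TensorProduct.map LinearMap.id (Coalgebra.counit (R := k) (A := H)) (δ a)) = a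

/-- Coassociativity of the coaction `δ` : `(δ ⊗ id) ∘ δ = (id ⊗ Δ) ∘ δ`
up to the tensor associator. -/
def Coassoc (δ : A →ₐ[k] A ⊗[k] H) : Prop :=
  ∀ a : A, (TensorProduct.assoc k A H H)
      (TensorProduct.map δ.toLinearMap LinearMap.id (δ a))
    = TensorProduct.map LinearMap.id (Coalgebra.comul (R := k) (A := H)) (δ a)

/-- The `σ`-closure `⟨W⟩_σ = Σ_{n ≥ 0} σⁿ(W)` of a subspace `W`. -/
def sclosure {M : Type*} [AddCommGroup M] [Module k M]
    (σ : M →ₗ[k] M) (W : Submodule k M) : Submodule k M :=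
  ⨆ n : ℕ, Submodule.map (σ ^ n) W

/-- `(id ⊗ ε) ∘ c̃ = m`: the counit recovers multiplication from the lifted canonical map. -/
theorem counit_ctilde (δ : A →ₐ[k] A ⊗[k] H) (hcu : Counital δ) (x : A ⊗[k] A) :
    TensorProduct.rid k A (TensorProduct.map LinearMap.id
      (Coalgebra.counit (R := k) (A := H)) (ctilde δ x)) = LinearMap.mul' k A x := by
  induction x with
  | zero => simp
  | add x y hx hy => simp only [map_add, hx, hy]
  | tmul a a' =>
    -- `id ⊗ ε` is left `A`-linear, so the claim reduces to counitality at `a'`.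
    have key : ∀ t : A ⊗[k] H,
        TensorProduct.rid k A (TensorProduct.map LinearMap.id
          (Coalgebra.counit (R := k) (A := H))
          (TensorProduct.map (LinearMap.mul' k A) LinearMap.id
            ((TensorProduct.assoc k A A H).symm (a ⊗ₜ[k] t))))
        = a * TensorProduct.rid k A (TensorProduct.map LinearMap.id
            (Coalgebra.counit (R := k) (A := H)) t) := by
      intro t
      induction t with
      | zero => simp
      | add s t hs ht => simp only [TensorProduct.tmul_add, map_add, mul_add, hs, ht]
      | tmul b h => simp
    have h := key (δ a')
    rw [hcu a'] at h
    simpa [ctilde] using h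

/-- If `I ⊆ H⁺`, then `id ⊗ ε` vanishes on `A ⊗ I`. -/
theorem counit_AtI (I : Submodule k H)
    (hI : I ≤ LinearMap.ker (Coalgebra.counit (R := k) (A := H)))
    {z : A ⊗[k] H} (hz : z ∈ AtI A I) :
    TensorProduct.map LinearMap.id (Coalgebra.counit (R := k) (A := H)) z
      = (0 : A ⊗[k] k) := by
  suffices h : AtI A I ≤ LinearMap.ker (TensorProduct.map (LinearMap.id : A →ₗ[k] A)
      (Coalgebra.counit (R := k) (A := H))) from h hz
  refine Submodule.span_le.2 ?_
  rintro _ ⟨a, h, hh, rfl⟩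
  have h0 : Coalgebra.counit (R := k) h = 0 := hI hh
  simp [h0]

/-- Lemma 3.1: `π(ver_u⁻¹(A ⊗ I)) = can⁻¹(A ⊗ I)` in `Q = A ⊗_B A`. -/
theorem stmt3 (δ : A →ₐ[k] A ⊗[k] H) (hcu : Counital δ) (hca : Coassoc δ)
    (can : ((A ⊗[k] A) ⧸ Jrel δ) →ₗ[k] A ⊗[k] H)
    (hcan : ∀ x : A ⊗[k] A, can ((Jrel δ).mkQ x) = ctilde δ x)
    (hbij : Function.Bijective can)
    (I : Submodule k H)
    (hI : I ≤ LinearMap.ker (Coalgebra.counit (R := k) (A := H))) :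
    Submodule.map (Jrel δ).mkQ
        (LinearMap.ker (LinearMap.mul' k A) ⊓ Submodule.comap (ctilde δ) (AtI A I))
      = Submodule.comap can (AtI A I) := by
  apply le_antisymm
  · rintro _ ⟨x, ⟨-, hx⟩, rfl⟩
    rw [Submodule.mem_comap, hcan]
    exact hx
  · intro y hy
    obtain ⟨x, rfl⟩ := (Jrel δ).mkQ_surjective y
    rw [Submodule.mem_comap, hcan] at hy
    refine ⟨x, ⟨?_, hy⟩, rfl⟩
    change LinearMap.mul' k A x = 0
    rw [← counit_ctilde δ hcu x, counit_AtI I hI hy, map_zero]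

end
end

section
/- For all a, a′ ∈ A one has σ(π(a ⊗ a′)) = (a₍₀₎a′) · τ(a₍₁₎) in Q, where · denotes the left A-action on Q. That is, the braiding σ := can⁻¹ ∘ β̄ agrees with Đurđević's formula σ(a ⊗_B a′) = a₍₀₎ a′ τ(a₍₁₎) in terms of the translation map; equivalently, can((a₍₀₎a′) · τ(a₍₁₎)) = a₍₀₎a′ ⊗ a₍₁₎ (equation (7) in the proof of Lemma 3.2). -/
/-!
Since `can` is injective and `can ∘ σ = β̄`, the first identity follows from the second one. The
second identity holds because `can` is left `A`-linear (`can_act`): as `can (τ h) = 1 ⊗ h`, one gets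
`can ((c a') · τ(h)) = (c a') ⊗ h` for all `c ∈ A` and `h ∈ H` (`can_lift_act`), while `betaMap`
is by definition `c ⊗ h ↦ (c a') ⊗ h` applied to `δ a` (`betaMap_tmul`).
-/


open TensorProduct

noncomputable section

variable {k H A : Type*} [Field k] [Ring H] [HopfAlgebra k H] [Ring A] [Algebra k A]

theorem ctilde_mul_tmul (δ : A →ₐ[k] A ⊗[k] H) (c x y : A) :
    ctilde δ ((c * x) ⊗ₜ[k] y) =
      (LinearMap.mulLeft k c).rTensor H (ctilde δ (x ⊗ₜ[k] y)) := by
  simp only [ctilde, LinearMap.comp_apply, TensorProduct.map_tmul, LinearMap.id_apply,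
    LinearEquiv.coe_coe, AlgHom.toLinearMap_apply]
  induction δ y with
  | zero => simp
  | tmul u h => simp [mul_assoc]
  | add u v hu hv => simp only [TensorProduct.tmul_add, map_add, hu, hv]

theorem betaMap_tmul (δ : A →ₐ[k] A ⊗[k] H) (a a' : A) :
    betaMap δ (a ⊗ₜ[k] a') = (LinearMap.mulRight k a').rTensor H (δ a) := by
  simp only [betaMap, LinearMap.comp_apply, TensorProduct.map_tmul, LinearMap.id_apply,
    LinearEquiv.coe_coe, AlgHom.toLinearMap_apply]
  induction δ a with
  | zero => simp
  | tmul u h => simp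
  | add u v hu hv => simp only [TensorProduct.add_tmul, map_add, hu, hv]

/-- The canonical map is left `A`-linear, where `c ∈ A` acts on `A ⊗ H` by left multiplication on
the first factor. -/
theorem can_act (δ : A →ₐ[k] A ⊗[k] H)
    (can : ((A ⊗[k] A) ⧸ Jrel δ) →ₗ[k] A ⊗[k] H)
    (hcan : ∀ x : A ⊗[k] A, can ((Jrel δ).mkQ x) = ctilde δ x)
    (act : A →ₗ[k] ((A ⊗[k] A) ⧸ Jrel δ) →ₗ[k] (A ⊗[k] A) ⧸ Jrel δ)
    (hact : ∀ c x y : A, act c ((Jrel δ).mkQ (x ⊗ₜ[k] y)) = (Jrel δ).mkQ ((c * x) ⊗ₜ[k] y))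
    (c : A) (q : (A ⊗[k] A) ⧸ Jrel δ) :
    can (act c q) = (LinearMap.mulLeft k c).rTensor H (can q) := by
  obtain ⟨x, rfl⟩ := (Jrel δ).mkQ_surjective q
  induction x with
  | zero => simp only [map_zero]
  | tmul x y => rw [hact, hcan, hcan, ctilde_mul_tmul]
  | add u v hu hv => simp only [map_add, hu, hv]

/-- `can` sends `(c a') · τ(h)` to `(c a') ⊗ h`, stated for all tensors `z = ∑ c ⊗ h`. -/
theorem can_lift_act (δ : A →ₐ[k] A ⊗[k] H)
    (can : ((A ⊗[k] A) ⧸ Jrel δ) →ₗ[k] A ⊗[k] H)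
    (hcan : ∀ x : A ⊗[k] A, can ((Jrel δ).mkQ x) = ctilde δ x)
    (τ : H →ₗ[k] (A ⊗[k] A) ⧸ Jrel δ)
    (hτ : ∀ h : H, can (τ h) = (1 : A) ⊗ₜ[k] h)
    (act : A →ₗ[k] ((A ⊗[k] A) ⧸ Jrel δ) →ₗ[k] (A ⊗[k] A) ⧸ Jrel δ)
    (hact : ∀ c x y : A, act c ((Jrel δ).mkQ (x ⊗ₜ[k] y)) = (Jrel δ).mkQ ((c * x) ⊗ₜ[k] y))
    (a' : A) (z : A ⊗[k] H) :
    can ((TensorProduct.lift act ∘ₗ TensorProduct.map (LinearMap.mulRight k a') τ) z) =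
      (LinearMap.mulRight k a').rTensor H z := by
  induction z with
  | zero => simp only [map_zero]
  | tmul c h =>
    rw [LinearMap.comp_apply, TensorProduct.map_tmul, TensorProduct.lift.tmul,
      can_act δ can hcan act hact, hτ]
    simp
  | add u v hu hv => simp only [map_add, hu, hv]

/-- the Đurđević braiding `σ = can⁻¹ ∘ β̄` satisfies
`σ(a ⊗_B a') = (a₍₀₎a') · τ(a₍₁₎)`; equivalently
`can((a₍₀₎a') · τ(a₍₁₎)) = a₍₀₎a' ⊗ a₍₁₎`. -/
theorem stmt4 (δ : A →ₐ[k] A ⊗[k] H) (hcu : Counital δ) (hca : Coassoc δ)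
    (can : ((A ⊗[k] A) ⧸ Jrel δ) →ₗ[k] A ⊗[k] H)
    (hcan : ∀ x : A ⊗[k] A, can ((Jrel δ).mkQ x) = ctilde δ x)
    (hbij : Function.Bijective can)
    (βbar : ((A ⊗[k] A) ⧸ Jrel δ) →ₗ[k] A ⊗[k] H)
    (hβ : ∀ x : A ⊗[k] A, βbar ((Jrel δ).mkQ x) = betaMap δ x)
    (σ : ((A ⊗[k] A) ⧸ Jrel δ) →ₗ[k] (A ⊗[k] A) ⧸ Jrel δ)
    (hσ : ∀ y : (A ⊗[k] A) ⧸ Jrel δ, can (σ y) = βbar y)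
    (τ : H →ₗ[k] (A ⊗[k] A) ⧸ Jrel δ)
    (hτ : ∀ h : H, can (τ h) = (1 : A) ⊗ₜ[k] h)
    (act : A →ₗ[k] ((A ⊗[k] A) ⧸ Jrel δ) →ₗ[k] (A ⊗[k] A) ⧸ Jrel δ)
    (hact : ∀ c x y : A, act c ((Jrel δ).mkQ (x ⊗ₜ[k] y)) = (Jrel δ).mkQ ((c * x) ⊗ₜ[k] y)) :
    ∀ a a' : A,
      σ ((Jrel δ).mkQ (a ⊗ₜ[k] a')) =
        (TensorProduct.lift act ∘ₗ TensorProduct.map (LinearMap.mulRight k a') τ) (δ a) ∧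
      can ((TensorProduct.lift act ∘ₗ TensorProduct.map (LinearMap.mulRight k a') τ) (δ a))
        = betaMap δ (a ⊗ₜ[k] a') := by
  intro a a'
  have key : can ((TensorProduct.lift act ∘ₗ TensorProduct.map (LinearMap.mulRight k a') τ) (δ a))
      = betaMap δ (a ⊗ₜ[k] a') := by
    rw [can_lift_act δ can hcan τ hτ act hact, betaMap_tmul]
  exact ⟨hbij.injective (by rw [hσ, hβ, key]), key⟩

end
end

section
/- (Proposition 2.1(3), Đurđević: σ-commutativity of A) The multiplication m : A ⊗ A → A vanishes on J and induces a k-linear map m̄ : Q → A, and m̄ ∘ σ = m̄, i.e. the induced multiplication on the balanced tensor product is invariant under the Đurđević braiding. -/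
/-!
Let `E = id ⊗ ε : A ⊗ H → A`. Counitality of the coaction gives `E ∘ c̃ = m` and `E ∘ β = m`
(`idCounit_ctilde`, `idCounit_betaMap`). Hence `m̄ = E ∘ can` is the map induced by `m`, and
`m̄ ∘ σ = E ∘ can ∘ σ = E ∘ β̄ = m̄`.
-/

open TensorProduct

noncomputable section

variable {k H A : Type*} [Field k] [Ring H] [HopfAlgebra k H] [Ring A] [Algebra k A]

/-- The map `id ⊗ ε : A ⊗ H → A`, followed by the identification `A ⊗ k ≅ A`. -/
def idCounit (k H A : Type*) [Field k] [Ring H] [HopfAlgebra k H] [Ring A] [Algebra k A] :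
    A ⊗[k] H →ₗ[k] A :=
  (TensorProduct.rid k A).toLinearMap ∘ₗ
    TensorProduct.map LinearMap.id (Coalgebra.counit (R := k) (A := H))

theorem idCounit_tmul (a : A) (h : H) :
    idCounit k H A (a ⊗ₜ[k] h) = Coalgebra.counit (R := k) h • a := by
  simp [idCounit]

theorem idCounit_ctilde (δ : A →ₐ[k] A ⊗[k] H) (hcu : Counital δ) (x : A ⊗[k] A) :
    idCounit k H A (ctilde δ x) = LinearMap.mul' k A x := by
  induction x with
  | zero => simp
  | add x y hx hy => simp only [map_add, hx, hy]
  | tmul a a' =>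
    have key (z : A ⊗[k] H) :
        idCounit k H A (TensorProduct.map (LinearMap.mul' k A) LinearMap.id
          ((TensorProduct.assoc k A A H).symm (a ⊗ₜ[k] z))) = a * idCounit k H A z := by
      induction z with
      | zero => simp
      | add x y hx hy => simp only [TensorProduct.tmul_add, map_add, hx, hy, mul_add]
      | tmul b h => simp [idCounit_tmul]
    have h : idCounit k H A (δ a') = a' := hcu a'
    simpa [ctilde, h] using key (δ a')

theorem idCounit_betaMap (δ : A →ₐ[k] A ⊗[k] H) (hcu : Counital δ) (x : A ⊗[k] A) :
    idCounit k H A (betaMap δ x) = LinearMap.mul' k A x := by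
  induction x with
  | zero => simp
  | add x y hx hy => simp only [map_add, hx, hy]
  | tmul a a' =>
    have key (z : A ⊗[k] H) :
        idCounit k H A (TensorProduct.map (LinearMap.mul' k A) LinearMap.id
          ((TensorProduct.assoc k A A H).symm
            (TensorProduct.map LinearMap.id (TensorProduct.comm k H A).toLinearMap
              (TensorProduct.assoc k A H A (z ⊗ₜ[k] a'))))) = idCounit k H A z * a' := by
      induction z with
      | zero => simp
      | add x y hx hy => simp only [TensorProduct.add_tmul, map_add, hx, hy, add_mul]
      | tmul b h => simp [idCounit_tmul]
    have h : idCounit k H A (δ a) = a := hcu a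
    simpa [betaMap, h] using key (δ a)

/-- Proposition 2.1(3), Đurđević: σ-commutativity of A:
`m` vanishes on `J`, induces `m̄ : Q → A`, and `m̄ ∘ σ = m̄`. -/
theorem stmt7 (δ : A →ₐ[k] A ⊗[k] H) (hcu : Counital δ) (hca : Coassoc δ)
    (can : ((A ⊗[k] A) ⧸ Jrel δ) →ₗ[k] A ⊗[k] H)
    (hcan : ∀ x : A ⊗[k] A, can ((Jrel δ).mkQ x) = ctilde δ x)
    (hbij : Function.Bijective can)
    (βbar : ((A ⊗[k] A) ⧸ Jrel δ) →ₗ[k] A ⊗[k] H)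
    (hβ : ∀ x : A ⊗[k] A, βbar ((Jrel δ).mkQ x) = betaMap δ x)
    (σ : ((A ⊗[k] A) ⧸ Jrel δ) →ₗ[k] (A ⊗[k] A) ⧸ Jrel δ)
    (hσ : ∀ y : (A ⊗[k] A) ⧸ Jrel δ, can (σ y) = βbar y) :
    Jrel δ ≤ LinearMap.ker (LinearMap.mul' k A) ∧
    ∃ mbar : ((A ⊗[k] A) ⧸ Jrel δ) →ₗ[k] A,
      (∀ x : A ⊗[k] A, mbar ((Jrel δ).mkQ x) = LinearMap.mul' k A x) ∧
      ∀ y : (A ⊗[k] A) ⧸ Jrel δ, mbar (σ y) = mbar y := by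
  have hm (x : A ⊗[k] A) :
      idCounit k H A (can ((Jrel δ).mkQ x)) = LinearMap.mul' k A x := by
    rw [hcan, idCounit_ctilde δ hcu]
  refine ⟨fun x hx => ?_, idCounit k H A ∘ₗ can, hm, fun y => ?_⟩
  · have h0 : (Jrel δ).mkQ x = 0 := by simpa using hx
    rw [LinearMap.mem_ker, ← hm, h0, map_zero, map_zero]
  · obtain ⟨x, rfl⟩ := (Jrel δ).mkQ_surjective y
    simp only [LinearMap.comp_apply]
    rw [hσ, hβ, idCounit_betaMap δ hcu, hm]
end
end

section
/- (Surjectivity of the vertical map, used in Theorem 3.8(2)) Assume B ⊆ A is Hopf–Galois. Then the image of the universal calculus ker m under the lifted canonical map c̃ is exactly A ⊗ H⁺: c̃(ker m) = A ⊗ ker ε. In particular the vertical map ver_u : Ω¹_u(A) → A ⊗ H⁺ is surjective, and for any subspace I ⊆ H⁺ the induced map Ω¹_u(A) → (A ⊗ H⁺)/(A ⊗ I) is surjective. -/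
/-!
Write `e = id ⊗ ε : A ⊗ H → A`. Counitality of the coaction gives `e ∘ c̃ = m`
(`counitMap_ctilde`), and since `H = k1 ⊕ H⁺`, the kernel of `e` is `A ⊗ H⁺`
(`mem_AtI_iff`). Hence `ker m = c̃⁻¹(A ⊗ H⁺)`. The map `c̃ = can ∘ π` is surjective because
`can` is, so `c̃(ker m) = A ⊗ H⁺`. The other two claims follow at once.
-/

open TensorProduct

noncomputable section

variable {k H A : Type*} [Field k] [Ring H] [HopfAlgebra k H] [Ring A] [Algebra k A]

/-- The map `id ⊗ ε : A ⊗ H → A`, with `A ⊗ k` identified with `A`. -/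
def counitMap (k H A : Type*) [Field k] [Ring H] [HopfAlgebra k H] [Ring A] [Algebra k A] :
    A ⊗[k] H →ₗ[k] A :=
  (TensorProduct.rid k A).toLinearMap
    ∘ₗ TensorProduct.map LinearMap.id (Coalgebra.counit (R := k) (A := H))

theorem counitMap_tmul (a : A) (h : H) :
    counitMap k H A (a ⊗ₜ[k] h) = Coalgebra.counit (R := k) h • a := by
  simp [counitMap]

/-- Applying `id ⊗ ε` after the lifted canonical map recovers the multiplication: by left
`A`-linearity of `id ⊗ ε`, the element `c̃(a ⊗ b) = a b₍₀₎ ⊗ b₍₁₎` goes to `a b₍₀₎ ε(b₍₁₎)`,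
which is `a b` by counitality. -/
theorem counitMap_ctilde (δ : A →ₐ[k] A ⊗[k] H) (hcu : Counital δ) (x : A ⊗[k] A) :
    counitMap k H A (ctilde δ x) = LinearMap.mul' k A x := by
  induction x using TensorProduct.induction_on with
  | zero => simp
  | add x y hx hy => simp only [map_add, hx, hy]
  | tmul a a' =>
    have key : ∀ z : A ⊗[k] H,
        counitMap k H A (TensorProduct.map (LinearMap.mul' k A) LinearMap.id
          ((TensorProduct.assoc k A A H).symm (a ⊗ₜ[k] z))) = a * counitMap k H A z := by
      intro z
      induction z using TensorProduct.induction_on with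
      | zero => simp
      | add x y hx hy => simp only [tmul_add, map_add, hx, hy, mul_add]
      | tmul b h => simp [counitMap_tmul]
    have h1 : counitMap k H A (δ a') = a' := hcu a'
    simpa [ctilde, h1] using key (δ a')

/-- The decomposition of `A ⊗ H` along `H = k1 ⊕ H⁺`. -/
theorem sub_counitMap_mem_AtI (z : A ⊗[k] H) :
    z - counitMap k H A z ⊗ₜ[k] (1 : H)
      ∈ AtI A (LinearMap.ker (Coalgebra.counit (R := k) (A := H))) := by
  induction z using TensorProduct.induction_on with
  | zero => simp
  | add x y hx hy =>
    have := add_mem hx hy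
    rwa [← add_sub_add_comm, ← add_tmul, ← map_add] at this
  | tmul a h =>
    refine Submodule.subset_span ⟨a, h - Coalgebra.counit (R := k) h • 1, ?_, ?_⟩
    · simp
    · rw [counitMap_tmul, tmul_sub, smul_tmul]

theorem mem_AtI_iff (z : A ⊗[k] H) :
    z ∈ AtI A (LinearMap.ker (Coalgebra.counit (R := k) (A := H)))
      ↔ counitMap k H A z = 0 := by
  constructor
  · intro hz
    have hle : AtI A (LinearMap.ker (Coalgebra.counit (R := k) (A := H)))
        ≤ LinearMap.ker (counitMap k H A) := by
      refine Submodule.span_le.2 ?_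
      rintro _ ⟨a, h, hh, rfl⟩
      have hh' : Coalgebra.counit (R := k) h = 0 := hh
      simp [counitMap_tmul, hh']
    exact hle hz
  · intro hz
    simpa [hz] using sub_counitMap_mem_AtI z

/-- surjectivity of the vertical map: `c̃(ker m) = A ⊗ H⁺`; in
particular `ver_u` is surjective onto `A ⊗ H⁺` and, for any `I ⊆ H⁺`, the
induced map `Ω¹_u(A) → (A ⊗ H⁺)/(A ⊗ I)` is surjective. -/
theorem stmt14 (δ : A →ₐ[k] A ⊗[k] H) (hcu : Counital δ) (hca : Coassoc δ)
    (can : ((A ⊗[k] A) ⧸ Jrel δ) →ₗ[k] A ⊗[k] H)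
    (hcan : ∀ x : A ⊗[k] A, can ((Jrel δ).mkQ x) = ctilde δ x)
    (hbij : Function.Bijective can) :
    Submodule.map (ctilde δ) (LinearMap.ker (LinearMap.mul' k A))
      = AtI A (LinearMap.ker (Coalgebra.counit (R := k) (A := H))) ∧
    (∀ v ∈ AtI A (LinearMap.ker (Coalgebra.counit (R := k) (A := H))),
      ∃ x ∈ LinearMap.ker (LinearMap.mul' k A), ctilde δ x = v) ∧
    ∀ I : Submodule k H, I ≤ LinearMap.ker (Coalgebra.counit (R := k) (A := H)) →
      ∀ v ∈ AtI A (LinearMap.ker (Coalgebra.counit (R := k) (A := H))),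
        ∃ x ∈ LinearMap.ker (LinearMap.mul' k A), ctilde δ x - v ∈ AtI A I := by
  have hlift : ∀ v ∈ AtI A (LinearMap.ker (Coalgebra.counit (R := k) (A := H))),
      ∃ x ∈ LinearMap.ker (LinearMap.mul' k A), ctilde δ x = v := by
    intro v hv
    obtain ⟨q, hq⟩ := hbij.surjective v
    obtain ⟨x, rfl⟩ := (Jrel δ).mkQ_surjective q
    rw [hcan] at hq
    refine ⟨x, ?_, hq⟩
    rw [LinearMap.mem_ker, ← counitMap_ctilde δ hcu, hq]
    exact (mem_AtI_iff v).1 hv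
  refine ⟨le_antisymm ?_ hlift, hlift, ?_⟩
  · rintro _ ⟨x, hx, rfl⟩
    rw [mem_AtI_iff, counitMap_ctilde δ hcu]
    exact hx
  · intro I _ v hv
    obtain ⟨x, hx, hxv⟩ := hlift v hv
    exact ⟨x, hx, by simp [hxv]⟩

end
end

section
/- (Proposition 4.2) Let I ⊆ H⁺ be a k-subspace and ℓ a strong connection with connection 1-form ω. Then the σ-closure of the translation-map image of I equals the σ-closure of the balanced image of the connection form: ⟨τ(I)⟩_σ = ⟨π(ω(I))⟩_σ, where τ(I) denotes the k-span of {τ(h) : h ∈ I}. In particular, for any σ-generated calculus with balanced relations N^bal = ⟨π(ω(I))⟩_σ one has ⟨τ(I)⟩_σ = N^bal. -/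
open TensorProduct

noncomputable section

variable {k H A : Type*} [Field k] [Ring H] [HopfAlgebra k H] [Ring A] [Algebra k A]

/-- Proposition 4.2: `⟨τ(I)⟩_σ = ⟨π(ω(I))⟩_σ`; in particular for a
σ-generated calculus with `N^bal = ⟨π(ω(I))⟩_σ` one has `⟨τ(I)⟩_σ = N^bal`. -/
theorem stmt15 (δ : A →ₐ[k] A ⊗[k] H) (hcu : Counital δ) (hca : Coassoc δ)
    (can : ((A ⊗[k] A) ⧸ Jrel δ) →ₗ[k] A ⊗[k] H)
    (hcan : ∀ x : A ⊗[k] A, can ((Jrel δ).mkQ x) = ctilde δ x)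
    (hbij : Function.Bijective can)
    (βbar : ((A ⊗[k] A) ⧸ Jrel δ) →ₗ[k] A ⊗[k] H)
    (hβ : ∀ x : A ⊗[k] A, βbar ((Jrel δ).mkQ x) = betaMap δ x)
    (σ : ((A ⊗[k] A) ⧸ Jrel δ) →ₗ[k] (A ⊗[k] A) ⧸ Jrel δ)
    (hσ : ∀ y : (A ⊗[k] A) ⧸ Jrel δ, can (σ y) = βbar y)
    (τ : H →ₗ[k] (A ⊗[k] A) ⧸ Jrel δ)
    (hτ : ∀ h : H, can (τ h) = (1 : A) ⊗ₜ[k] h)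
    (ℓ : H →ₗ[k] A ⊗[k] A)
    (hℓ1 : ℓ 1 = (1 : A) ⊗ₜ[k] (1 : A))
    (hℓ2 : ∀ h : H,
      TensorProduct.map LinearMap.id δ.toLinearMap (ℓ h)
        = (TensorProduct.assoc k A A H)
            (TensorProduct.map ℓ LinearMap.id (Coalgebra.comul (R := k) h)))
    (hℓ3 : ∀ h : H, ctilde δ (ℓ h) = (1 : A) ⊗ₜ[k] h)
    (I : Submodule k H)
    (hI : I ≤ LinearMap.ker (Coalgebra.counit (R := k) (A := H))) :
    sclosure σ (Submodule.span k (τ '' (I : Set H)))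
      = sclosure σ
          (Submodule.map (Jrel δ).mkQ
            (Submodule.span k
              ((fun h : H =>
                  ℓ h - Coalgebra.counit (R := k) h • ((1 : A) ⊗ₜ[k] (1 : A)))
                '' (I : Set H)))) := by
  -- On `I` the counit vanishes, so `ω = ℓ` there, and `π ∘ ℓ = τ` because both
  -- are sent by the injective map `can` to `h ↦ 1 ⊗ h`.
  congr 1
  rw [Submodule.map_span, Set.image_image]
  congr 1
  refine Set.image_congr fun h hh => hbij.1 ?_
  have hε : Coalgebra.counit (R := k) h = 0 := hI hh
  rw [hτ, hε, zero_smul, sub_zero, hcan, hℓ3]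

end
end
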